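/- arXiv:2407.20155 — 2 statements merged into one kernel-verified Lean document; each statement's English description precedes it below -/
import Mathlib

section
/- If u : (0,∞) × ℝ → ℝ is a smooth solution of the heat equation u_t = u_xx, then for every a > 0 the function v(t,x) := (1 + 4at)^(−1/2) · exp(−a·x²/(1 + 4at)) · u(t/(1 + 4at), x/(1 + 4at)) is also a solution of v_t = v_xx on (0,∞) × ℝ. This is the finite transformation generated by the projective symmetry v₅ = t²∂_t + tx∂_x − (1/4)(2t + x²)u∂_u of the heat equation. -/
open Real Set

/-!
The transformed function is `m • w`, where `m` is the multiplier and `w` is `u` precomposed with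
the projective change of variables. The product rule for the heat operator `H = ∂_t - ∂_x²` reads
`H (m • w) = H m • w + m • H w - 2 m_x • w_x`. The multiplier is itself a solution, being the image
of `u = 1`, so the first term vanishes. The chain rule gives `H w = c⁻² • (H u - 4ax • u_x)` with
`c = 1 + 4at`, and since `m_x = -(2ax / c) m`, the two first-order terms cancel. Hence
`H (m • w) = c⁻² m • H u`, with `H u` taken at the transformed point.
-/

section Calculus

variable {𝕜 E : Type*} [NontriviallyNormedField 𝕜] [NormedAddCommGroup E] [NormedSpace 𝕜 E]

theorem hasDerivAt_comp₂_of_differentiableAt_uncurry {u : 𝕜 → 𝕜 → E} {α β : 𝕜 → 𝕜} {α' β' t : 𝕜}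
    (hu : DifferentiableAt 𝕜 (Function.uncurry u) (α t, β t))
    (hα : HasDerivAt α α' t) (hβ : HasDerivAt β β' t) :
    HasDerivAt (fun s ↦ u (α s) (β s))
      (α' • deriv (fun r ↦ u r (β t)) (α t) + β' • deriv (u (α t)) (β t)) t := by
  set L := fderiv 𝕜 (Function.uncurry u) (α t, β t)
  have hL : HasFDerivAt (Function.uncurry u) L (α t, β t) := hu.hasFDerivAt
  have deriv_fst : deriv (fun r ↦ u r (β t)) (α t) = L (1, 0) :=
    (hL.comp_hasDerivAt (f := fun r ↦ (r, β t)) (α t)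
      ((hasDerivAt_id' (α t)).prodMk (hasDerivAt_const (α t) (β t)))).deriv
  have deriv_snd : deriv (u (α t)) (β t) = L (0, 1) :=
    (hL.comp_hasDerivAt (f := fun r ↦ (α t, r)) (β t)
      ((hasDerivAt_const (β t) (α t)).prodMk (hasDerivAt_id' (β t)))).deriv
  have apply_eq : L (α', β') = α' • L (1, 0) + β' • L (0, 1) := by
    simp [← map_smul, ← map_add]
  rw [deriv_fst, deriv_snd, ← apply_eq]
  exact hL.comp_hasDerivAt (f := fun s ↦ (α s, β s)) t (hα.prodMk hβ)

theorem iteratedDeriv_comp_div_const (n : ℕ) (c : 𝕜) (f : 𝕜 → E) (x : 𝕜) :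
    iteratedDeriv n (fun z ↦ f (z / c)) x = (c ^ n)⁻¹ • iteratedDeriv n f (x / c) := by
  induction n generalizing x with
  | zero => simp
  | succ n ih =>
    have deriv_step : deriv (fun z ↦ iteratedDeriv n f (z / c)) x =
        c⁻¹ • deriv (iteratedDeriv n f) (x / c) := by
      simpa only [div_eq_inv_mul] using deriv_comp_mul_left c⁻¹ (iteratedDeriv n f) x
    rw [iteratedDeriv_succ, funext ih, deriv_fun_const_smul_field, deriv_step, smul_smul,
      ← mul_inv, ← pow_succ, iteratedDeriv_succ]

theorem iteratedDeriv_two_smul {f : 𝕜 → 𝕜} {g : 𝕜 → E} {x : 𝕜}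
    (hf : ContDiffAt 𝕜 2 f x) (hg : ContDiffAt 𝕜 2 g x) :
    iteratedDeriv 2 (fun z ↦ f z • g z) x =
      iteratedDeriv 2 f x • g x + (2 : 𝕜) • deriv f x • deriv g x + f x • iteratedDeriv 2 g x := by
  have leibniz := iteratedDerivWithin_smul (n := 2) (mem_univ x) uniqueDiffOn_univ
    hf.contDiffWithinAt hg.contDiffWithinAt
  simp only [iteratedDerivWithin_univ] at leibniz
  refine leibniz.trans ?_
  simp only [Finset.sum_range_succ, Finset.sum_range_zero, Nat.choose_zero_right,
    Nat.choose_succ_self_right, Nat.choose_self, Nat.reduceAdd, Nat.add_one_sub_one, tsub_zero,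
    tsub_self, iteratedDeriv_zero, iteratedDeriv_one]
  module

end Calculus

section HeatOperator

variable {E : Type*} [NormedAddCommGroup E] [NormedSpace ℝ E]

/-- The heat operator `u ↦ u_t - u_xx` in one space variable, evaluated at `(t, x)`; functions of
time and space are curried, time first. -/
noncomputable def heatOperator (u : ℝ → ℝ → E) (t x : ℝ) : E :=
  deriv (fun s ↦ u s x) t - iteratedDeriv 2 (u t) x

theorem heatOperator_smul {m : ℝ → ℝ → ℝ} {w : ℝ → ℝ → E} {t x : ℝ}
    (hmt : DifferentiableAt ℝ (fun s ↦ m s x) t) (hmx : ContDiffAt ℝ 2 (m t) x)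
    (hwt : DifferentiableAt ℝ (fun s ↦ w s x) t) (hwx : ContDiffAt ℝ 2 (w t) x) :
    heatOperator (fun s z ↦ m s z • w s z) t x =
      heatOperator m t x • w t x + m t x • heatOperator w t x
        - (2 : ℝ) • deriv (m t) x • deriv (w t) x := by
  simp only [heatOperator, deriv_fun_smul hmt hwt, iteratedDeriv_two_smul hmx hwx]
  module

end HeatOperator

section ProjectiveTransform

variable {E : Type*} [NormedAddCommGroup E] [NormedSpace ℝ E]

/-- The Gaussian factor by which the projective symmetry with parameter `a` multiplies solutions
of the heat equation. -/
noncomputable def projectiveMultiplier (a t x : ℝ) : ℝ :=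
  (1 + 4 * a * t) ^ (-(1 : ℝ) / 2) * exp (-a * x ^ 2 / (1 + 4 * a * t))

/-- The function `u` precomposed with the projective change of variables
`(t, x) ↦ (t / (1 + 4at), x / (1 + 4at))`. -/
noncomputable def projectivePullback (a : ℝ) (u : ℝ → ℝ → E) (t x : ℝ) : E :=
  u (t / (1 + 4 * a * t)) (x / (1 + 4 * a * t))

/-- The action on functions of the finite transformation, with parameter `a`, generated by the
projective symmetry of the heat equation. -/
noncomputable def projectiveTransform (a : ℝ) (u : ℝ → ℝ → E) (t x : ℝ) : E :=
  projectiveMultiplier a t x • projectivePullback a u t x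

variable {a t : ℝ}

theorem hasDerivAt_one_add_four_mul (a t : ℝ) :
    HasDerivAt (fun s ↦ 1 + 4 * a * s) (4 * a) t := by
  simpa using ((hasDerivAt_id t).const_mul (4 * a)).const_add 1

theorem hasDerivAt_projectiveMultiplier_time (ht : 1 + 4 * a * t ≠ 0) (x : ℝ) :
    HasDerivAt (fun s ↦ projectiveMultiplier a s x)
      (projectiveMultiplier a t x *
        (4 * a ^ 2 * x ^ 2 / (1 + 4 * a * t) ^ 2 - 2 * a / (1 + 4 * a * t))) t := by
  have hpow := (hasDerivAt_one_add_four_mul a t).rpow_const (p := -(1 : ℝ) / 2) (.inl ht)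
  have hexp := ((hasDerivAt_const t (-a * x ^ 2)).fun_div (hasDerivAt_one_add_four_mul a t) ht).exp
  refine (hpow.fun_mul hexp).congr_deriv ?_
  rw [rpow_sub_one ht, projectiveMultiplier]
  field_simp
  ring

theorem hasDerivAt_projectiveMultiplier_space (a t x : ℝ) :
    HasDerivAt (projectiveMultiplier a t)
      (projectiveMultiplier a t x * (-2 * a * x / (1 + 4 * a * t))) x := by
  have hexp := (((hasDerivAt_pow 2 x).const_mul (-a)).div_const (1 + 4 * a * t)).exp
  refine (hexp.const_mul ((1 + 4 * a * t) ^ (-(1 : ℝ) / 2))).congr_deriv ?_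
  rw [projectiveMultiplier]
  push_cast
  ring

theorem iteratedDeriv_two_projectiveMultiplier_space (a t x : ℝ) :
    iteratedDeriv 2 (projectiveMultiplier a t) x =
      projectiveMultiplier a t x *
        (4 * a ^ 2 * x ^ 2 / (1 + 4 * a * t) ^ 2 - 2 * a / (1 + 4 * a * t)) := by
  have deriv_eq : deriv (projectiveMultiplier a t) =
      fun z ↦ projectiveMultiplier a t z * (-2 * a * z / (1 + 4 * a * t)) :=
    funext fun z ↦ (hasDerivAt_projectiveMultiplier_space a t z).deriv
  have hlin := ((hasDerivAt_id' x).const_mul (-2 * a)).div_const (1 + 4 * a * t)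
  rw [iteratedDeriv_succ, iteratedDeriv_one, deriv_eq,
    ((hasDerivAt_projectiveMultiplier_space a t x).fun_mul hlin).deriv]
  generalize 1 + 4 * a * t = c
  ring

theorem contDiff_projectiveMultiplier_space (a t : ℝ) {n : WithTop ℕ∞} :
    ContDiff ℝ n (projectiveMultiplier a t) := by
  unfold projectiveMultiplier
  fun_prop

theorem heatOperator_projectiveMultiplier (ht : 1 + 4 * a * t ≠ 0) (x : ℝ) :
    heatOperator (projectiveMultiplier a) t x = 0 := by
  rw [heatOperator, (hasDerivAt_projectiveMultiplier_time ht x).deriv,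
    iteratedDeriv_two_projectiveMultiplier_space, sub_self]

variable {u : ℝ → ℝ → E} {x : ℝ}

theorem hasDerivAt_projectivePullback_time (ht : 1 + 4 * a * t ≠ 0)
    (hu : DifferentiableAt ℝ (Function.uncurry u)
      (t / (1 + 4 * a * t), x / (1 + 4 * a * t))) :
    HasDerivAt (fun s ↦ projectivePullback a u s x)
      (((1 + 4 * a * t) ^ 2)⁻¹ •
        (deriv (fun r ↦ u r (x / (1 + 4 * a * t))) (t / (1 + 4 * a * t))
          - (4 * a * x) • deriv (u (t / (1 + 4 * a * t))) (x / (1 + 4 * a * t)))) t := by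
  have hc := hasDerivAt_one_add_four_mul a t
  refine (hasDerivAt_comp₂_of_differentiableAt_uncurry
    (α := fun s ↦ s / (1 + 4 * a * s)) (β := fun s ↦ x / (1 + 4 * a * s)) hu
    ((hasDerivAt_id' t).fun_div hc ht) ((hasDerivAt_const t x).fun_div hc ht)).congr_deriv ?_
  match_scalars <;> ring

theorem deriv_projectivePullback_space (a t x : ℝ) (u : ℝ → ℝ → E) :
    deriv (projectivePullback a u t) x =
      (1 + 4 * a * t)⁻¹ • deriv (u (t / (1 + 4 * a * t))) (x / (1 + 4 * a * t)) := by
  have iteratedDeriv_one_eq : iteratedDeriv 1 (projectivePullback a u t) x = _ :=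
    iteratedDeriv_comp_div_const 1 (1 + 4 * a * t) (u (t / (1 + 4 * a * t))) x
  simpa only [iteratedDeriv_one, pow_one] using iteratedDeriv_one_eq

theorem contDiffAt_projectivePullback_space {n : WithTop ℕ∞}
    (hu : ContDiffAt ℝ n (Function.uncurry u) (t / (1 + 4 * a * t), x / (1 + 4 * a * t))) :
    ContDiffAt ℝ n (projectivePullback a u t) x :=
  hu.comp x (f := fun z ↦ (t / (1 + 4 * a * t), z / (1 + 4 * a * t))) (by fun_prop)

theorem heatOperator_projectivePullback (ht : 1 + 4 * a * t ≠ 0)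
    (hu : DifferentiableAt ℝ (Function.uncurry u)
      (t / (1 + 4 * a * t), x / (1 + 4 * a * t))) :
    heatOperator (projectivePullback a u) t x =
      ((1 + 4 * a * t) ^ 2)⁻¹ •
        (heatOperator u (t / (1 + 4 * a * t)) (x / (1 + 4 * a * t))
          - (4 * a * x) • deriv (u (t / (1 + 4 * a * t))) (x / (1 + 4 * a * t))) := by
  have iteratedDeriv_two_eq : iteratedDeriv 2 (projectivePullback a u t) x = _ :=
    iteratedDeriv_comp_div_const 2 (1 + 4 * a * t) (u (t / (1 + 4 * a * t))) x
  rw [heatOperator, (hasDerivAt_projectivePullback_time ht hu).deriv, iteratedDeriv_two_eq,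
    heatOperator]
  module

theorem heatOperator_projectiveTransform (ht : 1 + 4 * a * t ≠ 0)
    (hu : ContDiffAt ℝ 2 (Function.uncurry u) (t / (1 + 4 * a * t), x / (1 + 4 * a * t))) :
    heatOperator (projectiveTransform a u) t x =
      (projectiveMultiplier a t x / (1 + 4 * a * t) ^ 2) •
        heatOperator u (t / (1 + 4 * a * t)) (x / (1 + 4 * a * t)) := by
  have hu' := hu.differentiableAt two_ne_zero
  have product_rule := heatOperator_smul
    (hasDerivAt_projectiveMultiplier_time ht x).differentiableAt
    (contDiff_projectiveMultiplier_space a t).contDiffAt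
    (hasDerivAt_projectivePullback_time ht hu').differentiableAt
    (contDiffAt_projectivePullback_space hu)
  refine product_rule.trans ?_
  rw [heatOperator_projectiveMultiplier ht, heatOperator_projectivePullback ht hu',
    (hasDerivAt_projectiveMultiplier_space a t x).deriv, deriv_projectivePullback_space]
  match_scalars <;> field_simp
  ring

theorem heat_projective_symmetry_general (ht : 0 < 1 + 4 * a * t)
    (hu : ContDiffAt ℝ 2 (Function.uncurry u) (t / (1 + 4 * a * t), x / (1 + 4 * a * t)))
    (hheat : deriv (fun s ↦ u s (x / (1 + 4 * a * t))) (t / (1 + 4 * a * t)) =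
      iteratedDeriv 2 (u (t / (1 + 4 * a * t))) (x / (1 + 4 * a * t))) :
    deriv (fun s ↦ projectiveTransform a u s x) t =
      iteratedDeriv 2 (projectiveTransform a u t) x := by
  have heatOperator_eq_zero : heatOperator u (t / (1 + 4 * a * t)) (x / (1 + 4 * a * t)) = 0 :=
    sub_eq_zero.mpr hheat
  refine sub_eq_zero.mp ((heatOperator_projectiveTransform ht.ne' hu).trans ?_)
  rw [heatOperator_eq_zero, smul_zero]

end ProjectiveTransform

/-- If `u` is a smooth solution of the heat equation `u_t = u_xx` on `(0,∞) × ℝ`, then for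
every `a > 0` the function
`v(t,x) := (1 + 4at)^(−1/2) · exp(−a·x²/(1 + 4at)) · u(t/(1 + 4at), x/(1 + 4at))`
is again a solution on `(0,∞) × ℝ`: the finite transformation generated by the projective
symmetry `v₅ = t²∂_t + tx∂_x − (1/4)(2t + x²)u∂_u`. -/
theorem heat_projective_symmetry (u : ℝ → ℝ → ℝ)
    (hsmooth : ContDiffOn ℝ (⊤ : ℕ∞) (fun p : ℝ × ℝ => u p.1 p.2) (Ioi 0 ×ˢ univ))
    (hheat : ∀ t > (0 : ℝ), ∀ x : ℝ,
      deriv (fun s => u s x) t = iteratedDeriv 2 (fun z => u t z) x)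
    (a : ℝ) (ha : 0 < a) :
    ∀ t > (0 : ℝ), ∀ x : ℝ,
      deriv (fun s => (fun t' x' => (1 + 4 * a * t') ^ (-(1 : ℝ) / 2)
          * Real.exp (-a * x' ^ 2 / (1 + 4 * a * t'))
          * u (t' / (1 + 4 * a * t')) (x' / (1 + 4 * a * t'))) s x) t =
        iteratedDeriv 2
          (fun z => (fun t' x' => (1 + 4 * a * t') ^ (-(1 : ℝ) / 2)
            * Real.exp (-a * x' ^ 2 / (1 + 4 * a * t'))
            * u (t' / (1 + 4 * a * t')) (x' / (1 + 4 * a * t'))) t z) x := by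
  intro t ht x
  have hc : 0 < 1 + 4 * a * t := by positivity
  have hT : 0 < t / (1 + 4 * a * t) := div_pos ht hc
  have hu : ContDiffAt ℝ 2 (Function.uncurry u) (t / (1 + 4 * a * t), x / (1 + 4 * a * t)) :=
    contDiffAt_infty.mp
      (hsmooth.contDiffAt (prod_mem_nhds (Ioi_mem_nhds hT) Filter.univ_mem)) 2
  exact heat_projective_symmetry_general hc hu (hheat _ hT _)
end

section
/- Fix b ∈ ℝ and y ∈ ℝ. If u : (0,∞) × (0,∞) → ℝ is a smooth solution of the spatially varying diffusion equation u_t = x·u_xx + b·u_x, then the characteristic w(t,x) := (x − y + bt)·u(t,x) + 2tx·u_x(t,x) + t²·u_t(t,x) of the symmetry generator v₃ + y·v₀ = t²∂_t + 2tx∂_x − (x − y + bt)u∂_u is again a solution of w_t = x·w_xx + b·w_x. -/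
open Real Set

/-!
Write `L = ∂ₜ - x ∂ₓ² - b ∂ₓ` and `Q = (x - y + b t) + 2 t x ∂ₓ + t² ∂ₜ`. The symmetry is the
commutator relation `L Q = Q L + 2 t L`: if `L u` vanishes on an open set, then so does `Q (L u)`,
and hence `L (Q u)`.
-/

open Filter Function Topology

section PartialDerivatives

variable {𝕜 F : Type*} [NontriviallyNormedField 𝕜] [NormedAddCommGroup F] [NormedSpace 𝕜 F]

/-- The partial derivative of a curried function of two variables in its first variable. -/
noncomputable def derivFst (u : 𝕜 → 𝕜 → F) (t x : 𝕜) : F :=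
  deriv (fun s => u s x) t

/-- The partial derivative of a curried function of two variables in its second variable. -/
noncomputable def derivSnd (u : 𝕜 → 𝕜 → F) (t x : 𝕜) : F :=
  deriv (fun z => u t z) x

variable {u v : 𝕜 → 𝕜 → F} {t x : 𝕜} {m n : WithTop ℕ∞}

theorem hasDerivAt_fst_fderiv (hu : DifferentiableAt 𝕜 (uncurry u) (t, x)) :
    HasDerivAt (fun s => u s x) (fderiv 𝕜 (uncurry u) (t, x) (1, 0)) t :=
  HasFDerivAt.comp_hasDerivAt (f := fun s => (s, x)) t hu.hasFDerivAt
    ((hasDerivAt_id t).prodMk (hasDerivAt_const t x))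

theorem hasDerivAt_snd_fderiv (hu : DifferentiableAt 𝕜 (uncurry u) (t, x)) :
    HasDerivAt (fun z => u t z) (fderiv 𝕜 (uncurry u) (t, x) (0, 1)) x :=
  HasFDerivAt.comp_hasDerivAt (f := fun z => (t, z)) x hu.hasFDerivAt
    ((hasDerivAt_const x t).prodMk (hasDerivAt_id x))

theorem derivFst_eq_fderiv (hu : DifferentiableAt 𝕜 (uncurry u) (t, x)) :
    derivFst u t x = fderiv 𝕜 (uncurry u) (t, x) (1, 0) :=
  (hasDerivAt_fst_fderiv hu).deriv

theorem derivSnd_eq_fderiv (hu : DifferentiableAt 𝕜 (uncurry u) (t, x)) :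
    derivSnd u t x = fderiv 𝕜 (uncurry u) (t, x) (0, 1) :=
  (hasDerivAt_snd_fderiv hu).deriv

theorem hasDerivAt_derivFst (hu : DifferentiableAt 𝕜 (uncurry u) (t, x)) :
    HasDerivAt (fun s => u s x) (derivFst u t x) t :=
  (hasDerivAt_fst_fderiv hu).differentiableAt.hasDerivAt

theorem hasDerivAt_derivSnd (hu : DifferentiableAt 𝕜 (uncurry u) (t, x)) :
    HasDerivAt (fun z => u t z) (derivSnd u t x) x :=
  (hasDerivAt_snd_fderiv hu).differentiableAt.hasDerivAt

theorem derivFst_congr (h : uncurry u =ᶠ[𝓝 (t, x)] uncurry v) :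
    derivFst u t x = derivFst v t x :=
  EventuallyEq.deriv_eq ((Continuous.prodMk_left x).tendsto t |>.eventually h)

theorem derivSnd_congr (h : uncurry u =ᶠ[𝓝 (t, x)] uncurry v) :
    derivSnd u t x = derivSnd v t x :=
  EventuallyEq.deriv_eq ((Continuous.prodMk_right t).tendsto x |>.eventually h)

theorem eventually_differentiableAt {E : Type*} [NormedAddCommGroup E] [NormedSpace 𝕜 E]
    {f : E → F} {p : E} (hf : ContDiffAt 𝕜 n f p) (hn : 1 ≤ n) :
    ∀ᶠ q in 𝓝 p, DifferentiableAt 𝕜 f q :=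
  ((hf.of_le hn).eventually (by simp)).mono fun _ hq => hq.differentiableAt one_ne_zero

theorem uncurry_derivFst_eventuallyEq_fderiv (hu : ContDiffAt 𝕜 n (uncurry u) (t, x))
    (hn : 1 ≤ n) :
    uncurry (derivFst u) =ᶠ[𝓝 (t, x)] fun p => fderiv 𝕜 (uncurry u) p (1, 0) :=
  (eventually_differentiableAt hu hn).mono fun _ hp => derivFst_eq_fderiv hp

theorem uncurry_derivSnd_eventuallyEq_fderiv (hu : ContDiffAt 𝕜 n (uncurry u) (t, x))
    (hn : 1 ≤ n) :
    uncurry (derivSnd u) =ᶠ[𝓝 (t, x)] fun p => fderiv 𝕜 (uncurry u) p (0, 1) :=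
  (eventually_differentiableAt hu hn).mono fun _ hp => derivSnd_eq_fderiv hp

theorem contDiffAt_derivFst (hu : ContDiffAt 𝕜 n (uncurry u) (t, x)) (hmn : m + 1 ≤ n) :
    ContDiffAt 𝕜 m (uncurry (derivFst u)) (t, x) :=
  ((hu.fderiv_right hmn).clm_apply contDiffAt_const).congr_of_eventuallyEq
    (uncurry_derivFst_eventuallyEq_fderiv hu (le_add_self.trans hmn))

theorem contDiffAt_derivSnd (hu : ContDiffAt 𝕜 n (uncurry u) (t, x)) (hmn : m + 1 ≤ n) :
    ContDiffAt 𝕜 m (uncurry (derivSnd u)) (t, x) :=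
  ((hu.fderiv_right hmn).clm_apply contDiffAt_const).congr_of_eventuallyEq
    (uncurry_derivSnd_eventuallyEq_fderiv hu (le_add_self.trans hmn))

theorem derivFst_derivSnd_comm (hu : ContDiffAt 𝕜 n (uncurry u) (t, x))
    (hn : minSmoothness 𝕜 2 ≤ n) :
    derivFst (derivSnd u) t x = derivSnd (derivFst u) t x := by
  have two_le : 1 + 1 ≤ n := one_add_one_eq_two.trans_le (le_minSmoothness.trans hn)
  have one_le : 1 ≤ n := le_add_self.trans two_le
  have hfderiv : DifferentiableAt 𝕜 (fderiv 𝕜 (uncurry u)) (t, x) :=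
    (hu.fderiv_right two_le).differentiableAt one_ne_zero
  have fderiv_apply_const (a c : 𝕜 × 𝕜) :
      fderiv 𝕜 (fun p => fderiv 𝕜 (uncurry u) p a) (t, x) c =
        fderiv 𝕜 (fderiv 𝕜 (uncurry u)) (t, x) c a := by
    simp [fderiv_clm_apply hfderiv (differentiableAt_const a)]
  calc derivFst (derivSnd u) t x
      = fderiv 𝕜 (fderiv 𝕜 (uncurry u)) (t, x) (1, 0) (0, 1) := by
        rw [derivFst_eq_fderiv ((contDiffAt_derivSnd hu two_le).differentiableAt one_ne_zero),
          (uncurry_derivSnd_eventuallyEq_fderiv hu one_le).fderiv_eq, fderiv_apply_const]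
    _ = fderiv 𝕜 (fderiv 𝕜 (uncurry u)) (t, x) (0, 1) (1, 0) :=
        hu.isSymmSndFDerivAt hn _ _
    _ = derivSnd (derivFst u) t x := by
        rw [derivSnd_eq_fderiv ((contDiffAt_derivFst hu two_le).differentiableAt one_ne_zero),
          (uncurry_derivFst_eventuallyEq_fderiv hu one_le).fderiv_eq, fderiv_apply_const]

theorem derivFst_derivSnd_derivSnd_comm (hu : ContDiffAt 𝕜 (minSmoothness 𝕜 3) (uncurry u) (t, x)) :
    derivFst (derivSnd (derivSnd u)) t x = derivSnd (derivSnd (derivFst u)) t x := by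
  have smoothness : minSmoothness 𝕜 2 + 1 ≤ minSmoothness 𝕜 3 := by
    rw [← minSmoothness_add, two_add_one_eq_three]
  rw [derivFst_derivSnd_comm (contDiffAt_derivSnd hu smoothness) le_rfl]
  refine derivSnd_congr ((hu.eventually (by simp)).mono fun p hp => ?_)
  exact derivFst_derivSnd_comm hp (le_self_add.trans smoothness)

end PartialDerivatives

section Diffusion

variable {𝕜 F : Type*} [NontriviallyNormedField 𝕜] [NormedAddCommGroup F] [NormedSpace 𝕜 F]

/-- The operator `L = ∂ₜ - x ∂ₓ² - b ∂ₓ`, whose kernel consists of the solutions of the spatially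
varying diffusion equation. -/
noncomputable def diffusionOp (b : 𝕜) (u : 𝕜 → 𝕜 → F) (t x : 𝕜) : F :=
  derivFst u t x - (x • derivSnd (derivSnd u) t x + b • derivSnd u t x)

/-- The characteristic `Q u` of the generator `t² ∂ₜ + 2 t x ∂ₓ - (x - y + b t) u ∂ᵤ`, with the
overall sign reversed relative to the convention `φ u - ξ uₓ - τ uₜ`. -/
noncomputable def symmetryCharacteristic (b y : 𝕜) (u : 𝕜 → 𝕜 → F) (t x : 𝕜) : F :=
  (x - y + b * t) • u t x + (2 * t * x) • derivSnd u t x + t ^ 2 • derivFst u t x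

/-- `u` satisfies the spatially varying diffusion equation `uₜ = x uₓₓ + b uₓ` at every point
`(t, x)` of `U`. Regularity of `u` is not part of the notion. -/
def SolvesDiffusionOn (b : 𝕜) (U : Set (𝕜 × 𝕜)) (u : 𝕜 → 𝕜 → F) : Prop :=
  ∀ t x, (t, x) ∈ U →
    deriv (fun s => u s x) t =
      x • iteratedDeriv 2 (fun z => u t z) x + b • deriv (fun z => u t z) x

variable {b y t x : 𝕜} {u : 𝕜 → 𝕜 → F} {U : Set (𝕜 × 𝕜)}

theorem solvesDiffusionOn_iff_diffusionOp_eq_zero :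
    SolvesDiffusionOn b U u ↔ ∀ t x, (t, x) ∈ U → diffusionOp b u t x = 0 := by
  simp only [SolvesDiffusionOn, diffusionOp, sub_eq_zero, iteratedDeriv_succ, iteratedDeriv_zero]
  rfl

theorem derivFst_diffusionOp
    (hut : DifferentiableAt 𝕜 (uncurry (derivFst u)) (t, x))
    (hux : DifferentiableAt 𝕜 (uncurry (derivSnd u)) (t, x))
    (huxx : DifferentiableAt 𝕜 (uncurry (derivSnd (derivSnd u))) (t, x)) :
    derivFst (diffusionOp b u) t x =
      derivFst (derivFst u) t x
        - (x • derivFst (derivSnd (derivSnd u)) t x + b • derivFst (derivSnd u) t x) :=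
  ((hasDerivAt_derivFst hut).sub (((hasDerivAt_derivFst huxx).const_smul x).add
    ((hasDerivAt_derivFst hux).const_smul b))).deriv

theorem derivSnd_diffusionOp
    (hut : DifferentiableAt 𝕜 (uncurry (derivFst u)) (t, x))
    (hux : DifferentiableAt 𝕜 (uncurry (derivSnd u)) (t, x))
    (huxx : DifferentiableAt 𝕜 (uncurry (derivSnd (derivSnd u))) (t, x)) :
    derivSnd (diffusionOp b u) t x =
      derivSnd (derivFst u) t x
        - (x • derivSnd (derivSnd (derivSnd u)) t x + (1 + b) • derivSnd (derivSnd u) t x) := by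
  refine ((hasDerivAt_derivSnd hut).sub (((hasDerivAt_id x).smul (hasDerivAt_derivSnd huxx)).add
    ((hasDerivAt_derivSnd hux).const_smul b))).deriv.trans ?_
  simp only [id_eq]
  module

theorem derivFst_symmetryCharacteristic
    (hu : DifferentiableAt 𝕜 (uncurry u) (t, x))
    (hut : DifferentiableAt 𝕜 (uncurry (derivFst u)) (t, x))
    (hux : DifferentiableAt 𝕜 (uncurry (derivSnd u)) (t, x)) :
    derivFst (symmetryCharacteristic b y u) t x =
      b • u t x + (x - y + b * t + 2 * t) • derivFst u t x + (2 * x) • derivSnd u t x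
        + (2 * t * x) • derivFst (derivSnd u) t x + t ^ 2 • derivFst (derivFst u) t x := by
  have coeff_u : HasDerivAt (fun s => x - y + b * s) b t := by
    simpa using ((hasDerivAt_id t).const_mul b).const_add (x - y)
  have coeff_ux : HasDerivAt (fun s => 2 * s * x) (2 * x) t := by
    simpa using ((hasDerivAt_id t).const_mul 2).mul_const x
  have coeff_ut : HasDerivAt (fun s => s ^ 2) (2 * t) t := by
    simpa using hasDerivAt_pow 2 t
  refine (((coeff_u.smul (hasDerivAt_derivFst hu)).add
    (coeff_ux.smul (hasDerivAt_derivFst hux))).add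
    (coeff_ut.smul (hasDerivAt_derivFst hut))).deriv.trans ?_
  module

theorem derivSnd_symmetryCharacteristic
    (hu : DifferentiableAt 𝕜 (uncurry u) (t, x))
    (hut : DifferentiableAt 𝕜 (uncurry (derivFst u)) (t, x))
    (hux : DifferentiableAt 𝕜 (uncurry (derivSnd u)) (t, x)) :
    derivSnd (symmetryCharacteristic b y u) t x =
      u t x + (x - y + b * t + 2 * t) • derivSnd u t x
        + (2 * t * x) • derivSnd (derivSnd u) t x + t ^ 2 • derivSnd (derivFst u) t x := by
  have coeff_u : HasDerivAt (fun z => z - y + b * t) 1 x :=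
    ((hasDerivAt_id x).sub_const y).add_const (b * t)
  have coeff_ux : HasDerivAt (fun z => 2 * t * z) (2 * t) x := by
    simpa using (hasDerivAt_id x).const_mul (2 * t)
  refine (((coeff_u.smul (hasDerivAt_derivSnd hu)).add
    (coeff_ux.smul (hasDerivAt_derivSnd hux))).add
    ((hasDerivAt_derivSnd hut).const_smul (t ^ 2))).deriv.trans ?_
  module

theorem derivSnd_derivSnd_symmetryCharacteristic (hu : ContDiffAt 𝕜 3 (uncurry u) (t, x)) :
    derivSnd (derivSnd (symmetryCharacteristic b y u)) t x =
      (2 : 𝕜) • derivSnd u t x + (x - y + b * t + 4 * t) • derivSnd (derivSnd u) t x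
        + (2 * t * x) • derivSnd (derivSnd (derivSnd u)) t x
        + t ^ 2 • derivSnd (derivSnd (derivFst u)) t x := by
  have hut : ContDiffAt 𝕜 2 (uncurry (derivFst u)) (t, x) :=
    contDiffAt_derivFst hu two_add_one_eq_three.le
  have hux : ContDiffAt 𝕜 2 (uncurry (derivSnd u)) (t, x) :=
    contDiffAt_derivSnd hu two_add_one_eq_three.le
  have huxx : ContDiffAt 𝕜 1 (uncurry (derivSnd (derivSnd u))) (t, x) :=
    contDiffAt_derivSnd hux one_add_one_eq_two.le
  have hutx : ContDiffAt 𝕜 1 (uncurry (derivSnd (derivFst u))) (t, x) :=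
    contDiffAt_derivSnd hut one_add_one_eq_two.le
  have first_derivative : uncurry (derivSnd (symmetryCharacteristic b y u)) =ᶠ[𝓝 (t, x)]
      uncurry fun s z => u s z + (z - y + b * s + 2 * s) • derivSnd u s z
        + (2 * s * z) • derivSnd (derivSnd u) s z + s ^ 2 • derivSnd (derivFst u) s z := by
    filter_upwards [eventually_differentiableAt hu (by norm_num),
      eventually_differentiableAt hut (by norm_num),
      eventually_differentiableAt hux (by norm_num)] with p hu hut hux
    exact derivSnd_symmetryCharacteristic hu hut hux
  have coeff_ux : HasDerivAt (fun z => z - y + b * t + 2 * t) 1 x :=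
    (((hasDerivAt_id x).sub_const y).add_const (b * t)).add_const (2 * t)
  have coeff_uxx : HasDerivAt (fun z => 2 * t * z) (2 * t) x := by
    simpa using (hasDerivAt_id x).const_mul (2 * t)
  rw [derivSnd_congr first_derivative]
  refine ((((hasDerivAt_derivSnd (hu.differentiableAt three_ne_zero)).add
    (coeff_ux.smul (hasDerivAt_derivSnd (hux.differentiableAt two_ne_zero)))).add
    (coeff_uxx.smul (hasDerivAt_derivSnd (huxx.differentiableAt one_ne_zero)))).add
    ((hasDerivAt_derivSnd (hutx.differentiableAt one_ne_zero)).const_smul (t ^ 2))).deriv.trans ?_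
  module

theorem diffusionOp_symmetryCharacteristic
    (hu : ContDiffAt 𝕜 (minSmoothness 𝕜 3) (uncurry u) (t, x)) :
    diffusionOp b (symmetryCharacteristic b y u) t x =
      symmetryCharacteristic b y (diffusionOp b u) t x + (2 * t) • diffusionOp b u t x := by
  have hu3 : ContDiffAt 𝕜 3 (uncurry u) (t, x) := hu.of_le le_minSmoothness
  have hut : ContDiffAt 𝕜 2 (uncurry (derivFst u)) (t, x) :=
    contDiffAt_derivFst hu3 two_add_one_eq_three.le
  have hux : ContDiffAt 𝕜 2 (uncurry (derivSnd u)) (t, x) :=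
    contDiffAt_derivSnd hu3 two_add_one_eq_three.le
  have du := hu3.differentiableAt three_ne_zero
  have dut := hut.differentiableAt two_ne_zero
  have dux := hux.differentiableAt two_ne_zero
  have duxx := (contDiffAt_derivSnd hux one_add_one_eq_two.le).differentiableAt one_ne_zero
  have mixed : derivFst (derivSnd u) t x = derivSnd (derivFst u) t x :=
    derivFst_derivSnd_comm hu (minSmoothness_monotone (by norm_num))
  rw [diffusionOp, derivFst_symmetryCharacteristic du dut dux,
    derivSnd_symmetryCharacteristic du dut dux, derivSnd_derivSnd_symmetryCharacteristic hu3,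
    symmetryCharacteristic, derivFst_diffusionOp dut dux duxx, derivSnd_diffusionOp dut dux duxx,
    derivFst_derivSnd_derivSnd_comm hu, mixed, diffusionOp]
  module

theorem symmetryCharacteristic_eq_zero (hu : uncurry u =ᶠ[𝓝 (t, x)] 0) :
    symmetryCharacteristic b y u t x = 0 := by
  have value : u t x = 0 := hu.eq_of_nhds
  have dt : derivFst u t x = 0 := (derivFst_congr (v := 0) hu).trans (deriv_const t 0)
  have dx : derivSnd u t x = 0 := (derivSnd_congr (v := 0) hu).trans (deriv_const x 0)
  simp [symmetryCharacteristic, value, dt, dx]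

theorem characteristic_of_diffusion_symmetry_is_solution_general (hU : IsOpen U)
    (hu : ContDiffOn 𝕜 (minSmoothness 𝕜 3) (uncurry u) U) (hsol : SolvesDiffusionOn b U u) :
    SolvesDiffusionOn b U (symmetryCharacteristic b y u) := by
  rw [solvesDiffusionOn_iff_diffusionOp_eq_zero] at hsol ⊢
  intro t x hp
  have hU_nhds : U ∈ 𝓝 (t, x) := hU.mem_nhds hp
  have vanishes : uncurry (diffusionOp b u) =ᶠ[𝓝 (t, x)] 0 :=
    eventually_of_mem hU_nhds fun q hq => hsol q.1 q.2 hq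
  rw [diffusionOp_symmetryCharacteristic (hu.contDiffAt hU_nhds),
    symmetryCharacteristic_eq_zero vanishes, hsol t x hp, smul_zero, add_zero]

end Diffusion

/-- If `u` is a smooth solution of the spatially varying diffusion equation
`u_t = x·u_xx + b·u_x` on `(0,∞) × (0,∞)`, then the characteristic
`w(t,x) := (x − y + bt)·u + 2tx·u_x + t²·u_t` of the symmetry generator
`v₃ + y·v₀ = t²∂_t + 2tx∂_x − (x − y + bt)u∂_u` is again a solution of
`w_t = x·w_xx + b·w_x`. -/
theorem characteristic_of_diffusion_symmetry_is_solution (b y : ℝ) (u : ℝ → ℝ → ℝ)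
    (hsmooth : ContDiffOn ℝ (⊤ : ℕ∞) (fun p : ℝ × ℝ => u p.1 p.2) (Ioi 0 ×ˢ Ioi 0))
    (hdiff : ∀ t > (0 : ℝ), ∀ x > (0 : ℝ),
      deriv (fun s => u s x) t =
        x * iteratedDeriv 2 (fun z => u t z) x + b * deriv (fun z => u t z) x) :
    ∀ t > (0 : ℝ), ∀ x > (0 : ℝ),
      deriv (fun s => (fun t' x' => (x' - y + b * t') * u t' x'
          + 2 * t' * x' * deriv (fun z => u t' z) x'
          + t' ^ 2 * deriv (fun r => u r x') t') s x) t =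
        x * iteratedDeriv 2 (fun z => (fun t' x' => (x' - y + b * t') * u t' x'
            + 2 * t' * x' * deriv (fun z' => u t' z') x'
            + t' ^ 2 * deriv (fun r => u r x') t') t z) x +
          b * deriv (fun z => (fun t' x' => (x' - y + b * t') * u t' x'
            + 2 * t' * x' * deriv (fun z' => u t' z') x'
            + t' ^ 2 * deriv (fun r => u r x') t') t z) x :=
  fun t ht x hx => characteristic_of_diffusion_symmetry_is_solution_general
    (isOpen_Ioi.prod isOpen_Ioi)
    (hsmooth.of_le (minSmoothness_of_isRCLikeNormedField.trans_le (WithTop.coe_le_coe.2 le_top)))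
    (fun t x h => hdiff t h.1 x h.2) t x ⟨ht, hx⟩
end
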